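/- For n = 2: for all i,j ∈ {1,2}, Res_{s=0} Σ'_{k∈ℤ²} k_i k_j / |k|^{s+4} = δ_{ij} π. For n = 4: for all i,j ∈ {1,…,4}, Res_{s=0} Σ'_{k∈ℤ⁴} k_i k_j / |k|^{s+6} = δ_{ij} π²/2, and for all i,j,l,m ∈ {1,…,4}, Res_{s=0} Σ'_{k∈ℤ⁴} k_i k_j k_l k_m / |k|^{s+8} = (δ_{ij}δ_{lm} + δ_{il}δ_{jm} + δ_{im}δ_{jl}) π²/12. In each case the series converges for Re(s) > 0 and the residue is taken of its meromorphic continuation at s = 0. -/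

import Mathlib

open Filter Topology

noncomputable section

/-- Euclidean norm of an integer vector `k ∈ ℤⁿ`. -/
def znorm {n : ℕ} (k : Fin n → ℤ) : ℝ := Real.sqrt (∑ i, ((k i : ℝ)) ^ 2)

/-- One-dimensional theta sums with even powers. -/
def thT (j : ℕ) (t : ℝ) : ℝ := ∑' m : ℤ, (m : ℝ) ^ (2 * j) * Real.exp (-Real.pi * (m : ℝ) ^ 2 * t)

lemma thT_summable (j : ℕ) {t : ℝ} (ht : 0 < t) :
    Summable (fun m : ℤ => (m : ℝ) ^ (2 * j) * Real.exp (-Real.pi * (m : ℝ) ^ 2 * t)) := by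
  have h := summable_pow_mul_jacobiTheta₂_term_bound 0 ht (2 * j)
  refine h.congr fun m => ?_
  have : (|(m : ℝ)|) ^ (2 * j) = (m : ℝ) ^ (2 * j) := by rw [pow_mul, sq_abs, pow_mul]
  push_cast
  rw [this]
  congr 2
  ring

lemma thT_hasSum (j : ℕ) {t : ℝ} (ht : 0 < t) :
    HasSum (fun m : ℤ => (m : ℝ) ^ (2 * j) * Real.exp (-Real.pi * (m : ℝ) ^ 2 * t)) (thT j t) :=
  (thT_summable j ht).hasSum

lemma thT_hasDerivAt (j : ℕ) {t : ℝ} (ht : 0 < t) :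
    HasDerivAt (thT j) (-Real.pi * thT (j + 1) t) t := by
  have h2 : 0 < t / 2 := by positivity
  have key := hasDerivAt_tsum_of_isPreconnected (𝕜 := ℝ)
    (g := fun (m : ℤ) (t : ℝ) => (m : ℝ) ^ (2 * j) * Real.exp (-Real.pi * (m : ℝ) ^ 2 * t))
    (g' := fun (m : ℤ) (t : ℝ) =>
      -Real.pi * ((m : ℝ) ^ (2 * (j + 1)) * Real.exp (-Real.pi * (m : ℝ) ^ 2 * t)))
    (u := fun m : ℤ => Real.pi * ((m : ℝ) ^ (2 * (j + 1)) *
      Real.exp (-Real.pi * (m : ℝ) ^ 2 * (t / 2))))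
    (t := Set.Ioi (t / 2)) (y₀ := t) (y := t)
    ((thT_summable (j + 1) h2).mul_left _) isOpen_Ioi isPreconnected_Ioi ?_ ?_
    (by simp; linarith) (thT_summable j ht) (by simp; linarith)
  · rw [tsum_mul_left] at key
    exact key
  · intro m y _
    have h1 : HasDerivAt (fun t : ℝ => -Real.pi * (m : ℝ) ^ 2 * t) (-Real.pi * (m : ℝ) ^ 2) y := by
      simpa only [mul_one, id] using (hasDerivAt_id y).const_mul (-Real.pi * (m : ℝ) ^ 2)
    refine (h1.exp.const_mul ((m : ℝ) ^ (2 * j))).congr_deriv ?_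
    ring
  · intro m y hy
    have hm : 0 ≤ (m : ℝ) ^ (2 * (j + 1)) := by rw [pow_mul]; positivity
    rw [norm_mul, norm_neg, Real.norm_of_nonneg Real.pi_pos.le,
      Real.norm_of_nonneg (mul_nonneg hm (Real.exp_pos _).le)]
    have : 0 ≤ Real.pi * (m : ℝ) ^ 2 := by positivity
    have hy' : t / 2 < y := hy
    have h5 : -Real.pi * (m : ℝ) ^ 2 * y ≤ -Real.pi * (m : ℝ) ^ 2 * (t / 2) := by nlinarith
    gcongr

lemma thT_continuousOn (j : ℕ) : ContinuousOn (thT j) (Set.Ioi 0) :=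
  fun _ ht => (thT_hasDerivAt j ht).continuousAt.continuousWithinAt

lemma thT_zero_inv {t : ℝ} (ht : 0 < t) : thT 0 (1 / t) = Real.sqrt t * thT 0 t := by
  have h := Real.tsum_exp_neg_mul_int_sq ht
  have h1 : thT 0 t = ∑' n : ℤ, Real.exp (-Real.pi * t * (n : ℝ) ^ 2) := by
    simp only [thT, mul_zero, pow_zero, one_mul]
    congr 1; ext n; congr 1; ring
  have h2 : thT 0 (1 / t) = ∑' n : ℤ, Real.exp (-Real.pi / t * (n : ℝ) ^ 2) := by
    simp only [thT, mul_zero, pow_zero, one_mul]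
    congr 1; ext n; congr 1; ring
  rw [h1, h2, h, ← Real.sqrt_eq_rpow]
  have : Real.sqrt t ≠ 0 := (Real.sqrt_pos.2 ht).ne'
  field_simp

lemma thT_one_inv {t : ℝ} (ht : 0 < t) :
    Real.pi * thT 1 (1 / t) =
      Real.sqrt t * (t / 2 * thT 0 t - Real.pi * t ^ 2 * thT 1 t) := by
  have e : (fun x => thT 0 (1 / x)) =ᶠ[𝓝 t] fun x => Real.sqrt x * thT 0 x := by
    filter_upwards [eventually_gt_nhds ht] with x hx using thT_zero_inv hx
  have hi : HasDerivAt (fun x : ℝ => 1 / x) (-(t ^ 2)⁻¹) t := by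
    simpa using hasDerivAt_inv ht.ne'
  have d1 := (thT_hasDerivAt 0 (one_div_pos.2 ht)).comp t hi
  have d2 := ((Real.hasDerivAt_sqrt ht.ne').mul (thT_hasDerivAt 0 ht)).congr_of_eventuallyEq e
  have := d1.unique d2
  simp only [zero_add] at this
  have hs : Real.sqrt t ≠ 0 := (Real.sqrt_pos.2 ht).ne'
  have hss : Real.sqrt t ^ 2 = t := Real.sq_sqrt ht.le
  have h3 : Real.pi * thT 1 (1 / t) = t ^ 2 * (-Real.pi * thT 1 (1 / t) * -(t ^ 2)⁻¹) := by
    field_simp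
  rw [h3, this]
  have h4 : 1 / (2 * Real.sqrt t) = Real.sqrt t / (2 * t) := by
    rw [div_eq_div_iff (by positivity) (by positivity)]; nlinarith
  rw [h4]
  field_simp
  ring

lemma thT_two_inv {t : ℝ} (ht : 0 < t) :
    Real.pi ^ 2 * thT 2 (1 / t) =
      Real.sqrt t * (3 / 4 * t ^ 2 * thT 0 t - 3 * Real.pi * t ^ 3 * thT 1 t
        + Real.pi ^ 2 * t ^ 4 * thT 2 t) := by
  have e : (fun x => Real.pi * thT 1 (1 / x)) =ᶠ[𝓝 t]
      fun x => Real.sqrt x * (x / 2 * thT 0 x - Real.pi * x ^ 2 * thT 1 x) := by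
    filter_upwards [eventually_gt_nhds ht] with x hx using thT_one_inv hx
  have hi : HasDerivAt (fun x : ℝ => 1 / x) (-(t ^ 2)⁻¹) t := by
    simpa using hasDerivAt_inv ht.ne'
  have d1 := ((thT_hasDerivAt 1 (one_div_pos.2 ht)).comp t hi).const_mul Real.pi
  have d3 := ((((hasDerivAt_id t).div_const 2).mul (thT_hasDerivAt 0 ht)).sub
    (((hasDerivAt_pow 2 t).const_mul Real.pi).mul (thT_hasDerivAt 1 ht)))
  have d2 := ((Real.hasDerivAt_sqrt ht.ne').mul d3).congr_of_eventuallyEq e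
  have := d1.unique d2
  simp only [zero_add, id, Nat.reduceAdd, Nat.cast_ofNat, pow_one, Pi.mul_apply, Pi.sub_apply,
    Nat.add_one_sub_one] at this
  have hs : Real.sqrt t ≠ 0 := (Real.sqrt_pos.2 ht).ne'
  have hss : Real.sqrt t ^ 2 = t := Real.sq_sqrt ht.le
  have h3 : Real.pi ^ 2 * thT 2 (1 / t)
      = t ^ 2 * (Real.pi * (-Real.pi * thT 2 (1 / t) * -(t ^ 2)⁻¹)) := by
    field_simp
  rw [h3, this]
  have h4 : 1 / (2 * Real.sqrt t) = Real.sqrt t / (2 * t) := by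
    rw [div_eq_div_iff (by positivity) (by positivity)]; nlinarith
  rw [h4]
  field_simp
  ring

/-- The theta function of the harmonic quartic form. -/
def thG (t : ℝ) : ℝ := thT 2 t * thT 0 t ^ 3 - 3 * thT 1 t ^ 2 * thT 0 t ^ 2

lemma thG_inv {t : ℝ} (ht : 0 < t) : thG (1 / t) = t ^ 6 * thG t := by
  have h0 := thT_zero_inv ht
  have h1 := thT_one_inv ht
  have h2 := thT_two_inv ht
  have hss : Real.sqrt t ^ 2 = t := Real.sq_sqrt ht.le
  have hp : Real.pi ^ 2 ≠ 0 := pow_ne_zero _ Real.pi_ne_zero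
  apply mul_left_cancel₀ hp
  have : Real.pi ^ 2 * thG (1 / t) = (Real.pi ^ 2 * thT 2 (1 / t)) * thT 0 (1 / t) ^ 3
      - 3 * (Real.pi * thT 1 (1 / t)) ^ 2 * thT 0 (1 / t) ^ 2 := by
    unfold thG; ring
  rw [this, h0, h1, h2]
  have h4 : Real.sqrt t ^ 4 = t ^ 2 := by
    rw [show Real.sqrt t ^ 4 = (Real.sqrt t ^ 2) ^ 2 by ring, hss]
  unfold thG
  linear_combination (t^4 * Real.pi^2 * (thT 2 t * thT 0 t ^ 3 - 3 * thT 1 t ^ 2 * thT 0 t ^ 2)) * h4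

lemma hasSum_ptw {α β : Type*} [AddCommMonoid β] [TopologicalSpace β] {f g : α → β} {a : β}
    (h : HasSum f a) (e : ∀ x, f x = g x) : HasSum g a := by
  have : f = g := funext e
  exact this ▸ h

lemma hasSum_mul_real {α β : Type*} {f : α → ℝ} {g : β → ℝ} {a b : ℝ} (hf : HasSum f a)
    (hg : HasSum g b) : HasSum (fun x : α × β => f x.1 * g x.2) (a * b) :=
  hf.mul hg (summable_mul_of_summable_norm hf.summable.norm hg.summable.norm)

lemma hasSum_pi_prod (n : ℕ) (f : Fin n → ℤ → ℝ) (a : Fin n → ℝ) (hf : ∀ i, HasSum (f i) (a i)) :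
    HasSum (fun k : Fin n → ℤ => ∏ i, f i (k i)) (∏ i, a i) := by
  induction n with
  | zero => simp
  | succ n ih =>
    have h1 := ih (fun i => f i.succ) (fun i => a i.succ) (fun i => hf i.succ)
    have h2 := hasSum_mul_real (hf 0) h1
    have h3 := (Fin.consEquiv (fun _ : Fin (n + 1) => ℤ)).hasSum_iff
      (f := fun k : Fin (n + 1) → ℤ => ∏ i, f i (k i)) (a := ∏ i, a i)
    refine h3.1 ?_
    rw [Fin.prod_univ_succ]
    refine hasSum_ptw h2 fun x => ?_
    simp [Fin.prod_univ_succ, Fin.consEquiv]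

lemma znorm_sq {n : ℕ} (k : Fin n → ℤ) : znorm k ^ 2 = ∑ i, ((k i : ℝ)) ^ 2 :=
  Real.sq_sqrt (Finset.sum_nonneg fun _ _ => sq_nonneg _)

lemma znorm_nonneg {n : ℕ} (k : Fin n → ℤ) : 0 ≤ znorm k := Real.sqrt_nonneg _

lemma abs_le_znorm {n : ℕ} (k : Fin n → ℤ) (i : Fin n) : |(k i : ℝ)| ≤ znorm k := by
  apply Real.le_sqrt_of_sq_le
  rw [sq_abs]
  exact Finset.single_le_sum (f := fun i => (k i : ℝ) ^ 2) (fun _ _ => sq_nonneg _)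
    (Finset.mem_univ i)

lemma one_le_znorm {n : ℕ} {k : Fin n → ℤ} (hk : k ≠ 0) : 1 ≤ znorm k := by
  obtain ⟨i, hi⟩ := Function.ne_iff.1 hk
  refine le_trans ?_ (abs_le_znorm k i)
  have : (1 : ℤ) ≤ |k i| := Int.one_le_abs hi
  exact_mod_cast this

lemma znorm_zero {n : ℕ} : znorm (0 : Fin n → ℤ) = 0 := by simp [znorm]

lemma znorm_eq_zero {n : ℕ} {k : Fin n → ℤ} : znorm k = 0 ↔ k = 0 := by
  constructor
  · intro h
    by_contra hk
    linarith [one_le_znorm hk]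
  · rintro rfl; exact znorm_zero

lemma summable_max_rpow {r : ℝ} (hr : 1 < r) :
    Summable (fun m : ℤ => (max 1 |(m : ℝ)|) ^ (-r)) := by
  have h := Real.summable_abs_int_rpow hr
  refine (h.add ((hasSum_ite_eq (0 : ℤ) (1 : ℝ)).summable)).of_nonneg_of_le
    (fun m => by positivity) fun m => ?_
  by_cases hm : m = 0
  · subst hm
    simp
    positivity
  · have : (1 : ℤ) ≤ |m| := Int.one_le_abs hm
    have h1 : (1 : ℝ) ≤ |(m : ℝ)| := by exact_mod_cast this
    simp [hm, max_eq_right h1]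

lemma summable_znorm_rpow {n : ℕ} {r : ℝ} (hn : 0 < n) (hr : (n : ℝ) < r) :
    Summable (fun k : Fin n → ℤ => if k = 0 then 0 else znorm k ^ (-r)) := by
  have hn' : (0 : ℝ) < n := by exact_mod_cast hn
  have hr' : 1 < r / n := by rwa [one_lt_div hn']
  have h := (hasSum_pi_prod n (fun _ m => (max 1 |(m : ℝ)|) ^ (-(r / n))) _
    (fun _ => (summable_max_rpow hr').hasSum)).summable
  refine h.of_nonneg_of_le (fun k => ?_) fun k => ?_
  · split_ifs
    · rfl
    · exact Real.rpow_nonneg (znorm_nonneg _) _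
  · split_ifs with hk
    · positivity
    · have h1 := one_le_znorm hk
      calc znorm k ^ (-r) = ∏ i : Fin n, znorm k ^ (-(r / n)) := by
            rw [Finset.prod_const, Finset.card_univ, Fintype.card_fin,
              ← Real.rpow_mul_natCast (znorm_nonneg k)]
            congr 1
            field_simp
        _ ≤ _ := by
            refine Finset.prod_le_prod (fun i _ => Real.rpow_nonneg (znorm_nonneg _) _) fun i _ => ?_
            refine Real.rpow_le_rpow_of_nonpos (by positivity) (max_le h1 (abs_le_znorm k i)) ?_
            linarith

lemma summable_weight {n d : ℕ} (hn : 0 < n) (a : (Fin n → ℤ) → ℂ) (C : ℝ)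
    (ha : ∀ k, ‖a k‖ ≤ C * znorm k ^ d) {s : ℂ} (hs : 0 < s.re) :
    Summable (fun k : Fin n → ℤ => if k = 0 then 0 else a k / (znorm k : ℂ) ^ (s + n + d)) := by
  have h := (summable_znorm_rpow (r := s.re + n) hn (by linarith)).mul_left C
  refine Summable.of_norm_bounded h fun k => ?_
  split_ifs with hk
  · simp
  · have hp : 0 < znorm k := by linarith [one_le_znorm hk]
    rw [norm_div, Complex.norm_cpow_eq_rpow_re_of_pos hp, div_le_iff₀ (by positivity)]
    refine (ha k).trans (le_of_eq ?_)
    rw [mul_assoc, ← Real.rpow_add hp, ← Real.rpow_natCast]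
    congr 2
    simp
    ring

lemma summable_weight' {n d : ℕ} (hn : 0 < n) (a : (Fin n → ℤ) → ℂ) (C : ℝ)
    (ha : ∀ k, ‖a k‖ ≤ C * znorm k ^ d) {x : ℝ} (hx : 0 < x) :
    Summable (fun k : Fin n → ℤ => ‖a k‖ / (znorm k ^ 2) ^ ((x + n + d) / 2)) := by
  have h := (summable_weight hn a C ha (s := x) (by simpa using hx)).norm
  refine h.congr fun k => ?_
  have hnn : 0 ≤ znorm k := znorm_nonneg k
  rw [← Real.rpow_natCast, ← Real.rpow_mul hnn]
  have e : ((2 : ℕ) : ℝ) * ((x + n + d) / 2) = x + n + d := by push_cast; ring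
  rw [e]
  split_ifs with hk
  · subst hk
    rw [znorm_zero, Real.zero_rpow (by positivity)]
    simp
  · have hp : 0 < znorm k := by linarith [one_le_znorm hk]
    rw [norm_div, Complex.norm_cpow_eq_rpow_re_of_pos hp]
    simp

lemma hasSum_weight {n d : ℕ} (hn : 0 < n) (a : (Fin n → ℤ) → ℂ) (C : ℝ)
    (ha : ∀ k, ‖a k‖ ≤ C * znorm k ^ d) (F : ℝ → ℂ)
    (hF : ∀ t : ℝ, 0 < t → HasSum (fun k : Fin n → ℤ => if k = 0 then 0 else
      a k * Real.exp (-Real.pi * znorm k ^ 2 * t)) (F t)) {s : ℂ} (hs : 0 < s.re) :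
    HasSum (fun k : Fin n → ℤ => if k = 0 then 0 else a k / (znorm k : ℂ) ^ (s + n + d))
      ((Real.pi : ℂ) ^ ((s + n + d) / 2) * (Complex.Gamma ((s + n + d) / 2))⁻¹ *
        mellin F ((s + n + d) / 2)) := by
  set z : ℂ := (s + n + d) / 2 with hz
  have hzre : z.re = (s.re + n + d) / 2 := by simp [hz]
  have hz0 : 0 < z.re := by rw [hzre]; positivity
  have h := hasSum_mellin_pi_mul₀ (a := a) (p := fun k => znorm k ^ 2) (F := F) (s := z)
    (fun k => sq_nonneg _) hz0 (fun t ht => ?_) ?_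
  · have h2 := h.mul_left ((Real.pi : ℂ) ^ z * (Complex.Gamma z)⁻¹)
    refine hasSum_ptw h2 fun k => ?_
    have hg : Complex.Gamma z ≠ 0 := Complex.Gamma_ne_zero_of_re_pos hz0
    have hpi : (Real.pi : ℂ) ≠ 0 := Complex.ofReal_ne_zero.2 Real.pi_ne_zero
    have hpz : (Real.pi : ℂ) ^ z ≠ 0 := by simp [Complex.cpow_eq_zero_iff, hpi]
    have hz1 : z ≠ 0 := fun h => by rw [h] at hz0; simp at hz0
    split_ifs with hk
    · subst hk
      simp [znorm_zero, Complex.zero_cpow hz1]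
    · have hp : 0 < znorm k := by linarith [one_le_znorm hk]
      have hpc : (znorm k : ℂ) ≠ 0 := Complex.ofReal_ne_zero.2 hp.ne'
      have e : ((znorm k ^ 2 : ℝ) : ℂ) ^ z = (znorm k : ℂ) ^ (s + n + d) := by
        rw [pow_two, Complex.ofReal_mul, Complex.mul_cpow_ofReal_nonneg hp.le hp.le,
          ← Complex.cpow_add _ _ hpc]
        congr 1
        rw [hz]; ring
      rw [e, Complex.cpow_neg]
      field_simp
  · refine hasSum_ptw (hF t ht) fun k => ?_
    simp [znorm_eq_zero]
  · rw [hzre]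
    exact summable_weight' hn a C ha hs

lemma decay {n : ℕ} (a : (Fin n → ℤ) → ℂ) (F : ℝ → ℂ)
    (hF : ∀ t : ℝ, 0 < t → HasSum (fun k : Fin n → ℤ => if k = 0 then 0 else
      a k * Real.exp (-Real.pi * znorm k ^ 2 * t)) (F t)) (r : ℝ) :
    F =O[atTop] (fun t : ℝ => t ^ r) := by
  have hb : F =O[atTop] (fun t : ℝ => Real.exp (-Real.pi * t)) := by
    set A := ∑' k : Fin n → ℤ, ‖if k = 0 then (0 : ℂ) else
      a k * Real.exp (-Real.pi * znorm k ^ 2 * 1)‖ with hA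
    have hsum := ((hF 1 one_pos).summable.norm).hasSum
    refine Asymptotics.IsBigO.of_bound (Real.exp Real.pi * A) ?_
    filter_upwards [eventually_ge_atTop 1] with t ht
    rw [← (hF t (by linarith)).tsum_eq]
    have hs2 := hsum.mul_left (Real.exp (-Real.pi * (t - 1)))
    refine (tsum_of_norm_bounded hs2 fun k => ?_).trans (le_of_eq ?_)
    · split_ifs with hk
      · simp
      · rw [norm_mul, norm_mul, Complex.norm_real, Complex.norm_real, Real.norm_of_nonneg
          (Real.exp_pos _).le, Real.norm_of_nonneg (Real.exp_pos _).le, mul_left_comm,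
          ← Real.exp_add]
        gcongr
        have := one_le_znorm hk
        have h1 : 1 ≤ znorm k ^ 2 := by nlinarith
        have h2 : 0 ≤ Real.pi * ((znorm k ^ 2 - 1) * (t - 1)) :=
          mul_nonneg Real.pi_pos.le (mul_nonneg (by linarith) (by linarith))
        nlinarith
    · rw [Real.norm_of_nonneg (Real.exp_pos _).le, ← hA, mul_right_comm, ← Real.exp_add]
      congr 2
      ring
  exact hb.trans (isLittleO_exp_neg_mul_rpow_atTop Real.pi_pos r).isBigO

lemma hasSum_monomial {n : ℕ} (e : Fin n → ℕ) {t : ℝ} (ht : 0 < t) :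
    HasSum (fun k : Fin n → ℤ => (∏ i, (k i : ℝ) ^ (2 * e i)) *
      Real.exp (-Real.pi * znorm k ^ 2 * t)) (∏ i, thT (e i) t) := by
  refine hasSum_ptw (hasSum_pi_prod n _ _ (fun i => thT_hasSum (e i) ht)) fun k => ?_
  rw [Finset.prod_mul_distrib, ← Real.exp_sum, znorm_sq, Finset.mul_sum, Finset.sum_mul]

lemma hasSum_one {n : ℕ} {t : ℝ} (ht : 0 < t) :
    HasSum (fun k : Fin n → ℤ => if k = 0 then 0 else
      (1 : ℂ) * Real.exp (-Real.pi * znorm k ^ 2 * t)) (((thT 0 t ^ n : ℝ) : ℂ) - 1) := by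
  have h := hasSum_monomial (n := n) (fun _ => 0) ht
  simp only [mul_zero, pow_zero, Finset.prod_const_one, one_mul, Finset.prod_const,
    Finset.card_univ, Fintype.card_fin] at h
  have h1 := (Complex.hasSum_ofReal.2 h).sub (hasSum_ite_eq (0 : Fin n → ℤ) (1 : ℂ))
  refine hasSum_ptw h1 fun k => ?_
  by_cases hk : k = 0
  · simp [hk, znorm_zero]
  · simp [hk]

/-- The quartic weight. -/
def qw (k : Fin 4 → ℤ) : ℂ := (k 0 : ℂ) ^ 4 - 3 * ((k 0 : ℂ) ^ 2 * (k 1 : ℂ) ^ 2)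

lemma hasSum_quartic {t : ℝ} (ht : 0 < t) :
    HasSum (fun k : Fin 4 → ℤ => if k = 0 then 0 else
      qw k * Real.exp (-Real.pi * znorm k ^ 2 * t)) ((thG t : ℝ) : ℂ) := by
  have h := hasSum_monomial (n := 4) ![2, 0, 0, 0] ht
  have h' := hasSum_monomial (n := 4) ![1, 1, 0, 0] ht
  have h1 := (Complex.hasSum_ofReal.2 (h.sub (h'.mul_left 3)))
  have e : (∏ i, thT ((![2, 0, 0, 0] : Fin 4 → ℕ) i) t) -
      3 * (∏ i, thT ((![1, 1, 0, 0] : Fin 4 → ℕ) i) t) = thG t := by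
    simp [Fin.prod_univ_four, thG]
    ring
  rw [e] at h1
  refine hasSum_ptw h1 fun k => ?_
  by_cases hk : k = 0
  · simp [hk, Fin.prod_univ_four]
  · simp [hk, Fin.prod_univ_four, qw]
    ring

/-- Functional equation data for the theta function of `ℤⁿ`. -/
def epP (n : ℕ) (hn : 0 < n) : WeakFEPair ℂ where
  f := fun t => ((thT 0 t ^ n : ℝ) : ℂ)
  g := fun t => ((thT 0 t ^ n : ℝ) : ℂ)
  k := n / 2
  ε := 1
  f₀ := 1
  g₀ := 1
  hf_int := (Complex.continuous_ofReal.comp_continuousOn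
    ((thT_continuousOn 0).pow n)).locallyIntegrableOn measurableSet_Ioi
  hg_int := (Complex.continuous_ofReal.comp_continuousOn
    ((thT_continuousOn 0).pow n)).locallyIntegrableOn measurableSet_Ioi
  hk := by positivity
  hε := one_ne_zero
  h_feq := fun x hx => by
    have hx' : 0 < x := hx
    have e : x ^ ((n : ℝ) / 2) = Real.sqrt x ^ n := by
      rw [Real.sqrt_eq_rpow, ← Real.rpow_mul_natCast hx'.le]
      congr 1; ring
    rw [thT_zero_inv hx', e]
    simp [mul_pow]
  hf_top := fun r => decay (n := n) (fun _ => 1) _ (fun t ht => hasSum_one ht) r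
  hg_top := fun r => decay (n := n) (fun _ => 1) _ (fun t ht => hasSum_one ht) r

/-- Functional equation data for the quartic theta function. -/
def quP : WeakFEPair ℂ where
  f := fun t => ((thG t : ℝ) : ℂ)
  g := fun t => ((thG t : ℝ) : ℂ)
  k := 6
  ε := 1
  f₀ := 0
  g₀ := 0
  hf_int := (Complex.continuous_ofReal.comp_continuousOn
    ((((thT_continuousOn 2).mul ((thT_continuousOn 0).pow 3))).sub
      ((((thT_continuousOn 1).pow 2).const_mul 3).mul ((thT_continuousOn 0).pow 2)))
      ).locallyIntegrableOn measurableSet_Ioi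
  hg_int := (Complex.continuous_ofReal.comp_continuousOn
    ((((thT_continuousOn 2).mul ((thT_continuousOn 0).pow 3))).sub
      ((((thT_continuousOn 1).pow 2).const_mul 3).mul ((thT_continuousOn 0).pow 2)))
      ).locallyIntegrableOn measurableSet_Ioi
  hk := by positivity
  hε := one_ne_zero
  h_feq := fun x hx => by
    have hx' : 0 < x := hx
    rw [thG_inv hx']
    have e : x ^ (6 : ℝ) = x ^ 6 := by exact_mod_cast Real.rpow_natCast x 6
    rw [e]
    simp
  hf_top := fun r => by
    simpa using decay qw _ (fun t ht => hasSum_quartic ht) r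
  hg_top := fun r => by
    simpa using decay qw _ (fun t ht => hasSum_quartic ht) r

/-- Analytic continuation of the Epstein zeta function, shifted. -/
def epE (n : ℕ) (hn : 0 < n) (s : ℂ) : ℂ :=
  (Real.pi : ℂ) ^ ((s + n) / 2) *
    ((epP n hn).Λ₀ ((s + n) / 2) * (Complex.Gamma ((s + n) / 2))⁻¹
      - (Complex.Gamma ((s + n) / 2 + 1))⁻¹ + (2 / s) * (Complex.Gamma ((s + n) / 2))⁻¹)

lemma diff_pi_cpow (c : ℂ) : Differentiable ℂ (fun s : ℂ => (Real.pi : ℂ) ^ ((s + c) / 2)) := by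
  have hpi : (Real.pi : ℂ) ≠ 0 := Complex.ofReal_ne_zero.2 Real.pi_ne_zero
  intro s
  exact ((differentiableAt_id.add_const c).div_const 2).const_cpow (Or.inl hpi)

lemma diff_gamma (c d : ℂ) :
    Differentiable ℂ (fun s : ℂ => (Complex.Gamma ((s + c) / 2 + d))⁻¹) :=
  Complex.differentiable_one_div_Gamma.comp
    (((differentiable_id.add_const c).div_const 2).add_const d)

lemma diff_gamma' (c : ℂ) :
    Differentiable ℂ (fun s : ℂ => (Complex.Gamma ((s + c) / 2))⁻¹) := by
  simpa using diff_gamma c 0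

lemma diff_L0 (P : WeakFEPair ℂ) (c : ℂ) :
    Differentiable ℂ (fun s : ℂ => P.Λ₀ ((s + c) / 2)) :=
  P.differentiable_Λ₀.comp ((differentiable_id.add_const c).div_const 2)

lemma epE_diff (n : ℕ) (hn : 0 < n) : DifferentiableOn ℂ (epE n hn) {s : ℂ | s ≠ 0} := by
  intro s hs
  have hs' : s ≠ 0 := hs
  apply DifferentiableAt.differentiableWithinAt
  unfold epE
  exact (diff_pi_cpow _ s).mul ((((diff_L0 _ _ s).mul (diff_gamma' _ s)).sub
    (diff_gamma _ 1 s)).add (((differentiableAt_const 2).div differentiableAt_id hs').mul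
      (diff_gamma' _ s)))

lemma epE_hasSum (n : ℕ) (hn : 0 < n) {s : ℂ} (hs : 0 < s.re) :
    HasSum (fun k : Fin n → ℤ => if k = 0 then 0 else 1 / (znorm k : ℂ) ^ (s + n))
      (epE n hn s) := by
  have h := hasSum_weight (n := n) (d := 0) hn (fun _ => 1) 1 (by simp)
    (fun t => ((thT 0 t ^ n : ℝ) : ℂ) - 1) (fun t ht => hasSum_one ht) hs
  simp only [Nat.cast_zero, add_zero] at h
  convert h using 1
  set z : ℂ := (s + n) / 2 with hz
  have hre : (epP n hn).k < z.re := by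
    simp [epP, hz]; linarith
  have hz0 : 0 < z.re := lt_trans (epP n hn).hk hre
  have hz1 : z ≠ 0 := fun h => by rw [h] at hz0; simp at hz0
  have hm := ((epP n hn).hasMellin hre).2
  have hm' : mellin (fun t => ((thT 0 t ^ n : ℝ) : ℂ) - 1) z = (epP n hn).Λ z := hm
  have hs0 : s ≠ 0 := fun h => by rw [h] at hs; simp at hs
  have hk : (((epP n hn).k : ℝ) : ℂ) - z = - s / 2 := by
    simp [epP, hz]; ring
  rw [hm', WeakFEPair.Λ, hk]
  have e1 : (epP n hn).f₀ = 1 := rfl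
  have e2 : (epP n hn).g₀ = 1 := rfl
  have e3 : (epP n hn).ε = 1 := rfl
  rw [e1, e2, e3, epE, ← hz, Complex.Gamma_add_one z hz1]
  have hg : Complex.Gamma z ≠ 0 := Complex.Gamma_ne_zero_of_re_pos hz0
  simp only [smul_eq_mul]
  field_simp
  ring

lemma epE_res (n : ℕ) (hn : 0 < n) :
    Tendsto (fun s => s * epE n hn s) (𝓝[≠] (0 : ℂ))
      (𝓝 ((Real.pi : ℂ) ^ ((n : ℂ) / 2) * (2 * (Complex.Gamma ((n : ℂ) / 2))⁻¹))) := by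
  have hc : Continuous (fun s : ℂ => (Real.pi : ℂ) ^ ((s + n) / 2) *
    (s * ((epP n hn).Λ₀ ((s + n) / 2) * (Complex.Gamma ((s + n) / 2))⁻¹
      - (Complex.Gamma ((s + n) / 2 + 1))⁻¹) + 2 * (Complex.Gamma ((s + n) / 2))⁻¹)) :=
    (diff_pi_cpow _).continuous.mul ((continuous_id.mul
      (((diff_L0 _ _).continuous.mul (diff_gamma' _).continuous).sub
        (diff_gamma _ 1).continuous)).add (continuous_const.mul (diff_gamma' _).continuous))
  have h := (hc.tendsto 0).mono_left (nhdsWithin_le_nhds (s := {0}ᶜ))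
  simp only [zero_add, zero_mul] at h
  refine h.congr' ?_
  filter_upwards [self_mem_nhdsWithin] with s hs
  have hs' : s ≠ 0 := hs
  unfold epE
  field_simp

/-- The entire function attached to the quartic weight. -/
def quD (s : ℂ) : ℂ :=
  (Real.pi : ℂ) ^ ((s + 8) / 2) * (Complex.Gamma ((s + 8) / 2))⁻¹ * quP.Λ₀ ((s + 8) / 2)

lemma quD_diff : Differentiable ℂ quD :=
  ((diff_pi_cpow 8).mul (diff_gamma' 8)).mul (diff_L0 quP 8)

lemma qw_bound (k : Fin 4 → ℤ) : ‖qw k‖ ≤ 4 * znorm k ^ 4 := by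
  have h0 := abs_le_znorm k 0
  have h1 := abs_le_znorm k 1
  have hz := znorm_nonneg k
  calc ‖qw k‖ ≤ |(k 0 : ℝ)| ^ 4 + 3 * (|(k 0 : ℝ)| ^ 2 * |(k 1 : ℝ)| ^ 2) := by
        refine (norm_sub_le _ _).trans (le_of_eq ?_)
        simp [Complex.norm_intCast]
    _ ≤ znorm k ^ 4 + 3 * (znorm k ^ 2 * znorm k ^ 2) := by gcongr
    _ = 4 * znorm k ^ 4 := by ring

lemma quD_hasSum {s : ℂ} (hs : 0 < s.re) :
    HasSum (fun k : Fin 4 → ℤ => if k = 0 then 0 else qw k / (znorm k : ℂ) ^ (s + 8))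
      (quD s) := by
  have h := hasSum_weight (n := 4) (d := 4) (by norm_num) qw 4 qw_bound
    (fun t => ((thG t : ℝ) : ℂ)) (fun t ht => hasSum_quartic ht) hs
  have e : s + ((4 : ℕ) : ℂ) + ((4 : ℕ) : ℂ) = s + 8 := by push_cast; ring
  rw [e] at h
  convert h using 1
  unfold quD
  congr 1
  have hst : IsStrongFEPair quP := ⟨rfl, rfl⟩
  have h1 : quP.Λ = mellin quP.f := hst.Λ_eq
  have h2 : quP.Λ₀ ((s + 8) / 2) = quP.Λ ((s + 8) / 2) := by
    simp [WeakFEPair.Λ, hst.hf₀, hst.hg₀]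
  rw [h2, h1]
  rfl

/-- The term of a weighted lattice sum. -/
def zt {n : ℕ} (w : ℂ) (a : (Fin n → ℤ) → ℂ) (k : Fin n → ℤ) : ℂ :=
  if k = 0 then 0 else a k / (znorm k : ℂ) ^ w

/-- The weighted lattice sum. -/
def zS {n : ℕ} (w : ℂ) (a : (Fin n → ℤ) → ℂ) : ℂ := ∑' k, zt w a k

lemma zS_equiv {n : ℕ} (w : ℂ) (a : (Fin n → ℤ) → ℂ) (e : (Fin n → ℤ) ≃ (Fin n → ℤ))
    (he : ∀ k, znorm (e k) = znorm k) : zS w (fun k => a (e k)) = zS w a := by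
  unfold zS
  rw [← e.tsum_eq (zt w a)]
  congr 1
  ext k
  have : e k = 0 ↔ k = 0 := by rw [← znorm_eq_zero, he, znorm_eq_zero]
  simp [zt, this, he]

/-- Permutation of coordinates. -/
def permE {n : ℕ} (σ : Equiv.Perm (Fin n)) : (Fin n → ℤ) ≃ (Fin n → ℤ) where
  toFun k := fun i => k (σ i)
  invFun k := fun i => k (σ.symm i)
  left_inv k := by ext i; simp
  right_inv k := by ext i; simp

lemma znorm_permE {n : ℕ} (σ : Equiv.Perm (Fin n)) (k : Fin n → ℤ) :
    znorm (permE σ k) = znorm k := by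
  unfold znorm permE
  congr 1
  exact Equiv.sum_comp σ (fun i => (k i : ℝ) ^ 2)

/-- The sign attached to a flip. -/
def sg {n : ℕ} (p i : Fin n) : ℤ := if i = p then -1 else 1

lemma sg_mul {n : ℕ} (p i : Fin n) : sg p i * sg p i = 1 := by
  unfold sg; split_ifs <;> rfl

/-- Sign flip of one coordinate. -/
def flipE {n : ℕ} (p : Fin n) : (Fin n → ℤ) ≃ (Fin n → ℤ) where
  toFun k := fun i => sg p i * k i
  invFun k := fun i => sg p i * k i
  left_inv k := by ext i; simp [← mul_assoc, sg_mul]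
  right_inv k := by ext i; simp [← mul_assoc, sg_mul]

lemma znorm_flipE {n : ℕ} (p : Fin n) (k : Fin n → ℤ) : znorm (flipE p k) = znorm k := by
  unfold znorm flipE
  congr 1
  refine Finset.sum_congr rfl fun i _ => ?_
  have h : ((sg p i : ℤ) : ℝ) * (sg p i : ℤ) = 1 := by exact_mod_cast sg_mul p i
  simp only [Equiv.coe_fn_mk, Int.cast_mul]
  linear_combination ((k i : ℝ) ^ 2) * h

lemma zS_neg {n : ℕ} (w : ℂ) (a : (Fin n → ℤ) → ℂ) : zS w (fun k => - a k) = - zS w a := by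
  unfold zS
  rw [← tsum_neg]
  congr 1
  ext k
  unfold zt
  split_ifs
  · simp
  · ring

lemma zS_flip {n : ℕ} (w : ℂ) (a : (Fin n → ℤ) → ℂ) (p : Fin n)
    (h : ∀ k, a (flipE p k) = - a k) : zS w a = 0 := by
  have h1 := zS_equiv w a (flipE p) (znorm_flipE p)
  simp only [h] at h1
  rw [zS_neg] at h1
  exact self_eq_neg.1 h1.symm

/-- Quadratic monomials. -/
def mq {n : ℕ} (i j : Fin n) (k : Fin n → ℤ) : ℂ := (k i : ℂ) * (k j : ℂ)

/-- Quartic monomials. -/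
def mr {n : ℕ} (i j l m : Fin n) (k : Fin n → ℤ) : ℂ :=
  (k i : ℂ) * (k j : ℂ) * (k l : ℂ) * (k m : ℂ)

lemma mq_bound {n : ℕ} (i j : Fin n) (k : Fin n → ℤ) : ‖mq i j k‖ ≤ 1 * znorm k ^ 2 := by
  have h0 := abs_le_znorm k i
  have h1 := abs_le_znorm k j
  have hz := znorm_nonneg k
  calc ‖mq i j k‖ = |(k i : ℝ)| * |(k j : ℝ)| := by simp [mq, Complex.norm_intCast]
    _ ≤ znorm k * znorm k := by gcongr
    _ = _ := by ring

lemma mr_bound {n : ℕ} (i j l m : Fin n) (k : Fin n → ℤ) :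
    ‖mr i j l m k‖ ≤ 1 * znorm k ^ 4 := by
  have h0 := abs_le_znorm k i
  have h1 := abs_le_znorm k j
  have h2 := abs_le_znorm k l
  have h3 := abs_le_znorm k m
  have hz := znorm_nonneg k
  calc ‖mr i j l m k‖ = |(k i : ℝ)| * |(k j : ℝ)| * |(k l : ℝ)| * |(k m : ℝ)| := by
        simp [mr, Complex.norm_intCast]
    _ ≤ znorm k * znorm k * znorm k * znorm k := by gcongr
    _ = _ := by ring

lemma mq_hasSum {n : ℕ} (hn : 0 < n) (i j : Fin n) {s : ℂ} (hs : 0 < s.re) :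
    HasSum (zt (s + n + 2) (mq i j)) (zS (s + n + 2) (mq i j)) := by
  have h := summable_weight (d := 2) hn (mq i j) 1 (mq_bound i j) hs
  exact Summable.hasSum (f := zt (s + n + 2) (mq i j)) (by exact_mod_cast h)

lemma mr_hasSum {n : ℕ} (hn : 0 < n) (i j l m : Fin n) {s : ℂ} (hs : 0 < s.re) :
    HasSum (zt (s + n + 4) (mr i j l m)) (zS (s + n + 4) (mr i j l m)) := by
  have h := summable_weight (d := 4) hn (mr i j l m) 1 (mr_bound i j l m) hs
  exact Summable.hasSum (f := zt (s + n + 4) (mr i j l m)) (by exact_mod_cast h)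

lemma sum_mq {n : ℕ} (k : Fin n → ℤ) : ∑ i, mq i i k = (znorm k : ℂ) ^ 2 := by
  have h := congrArg (fun x : ℝ => (x : ℂ)) (znorm_sq k)
  simp only [Complex.ofReal_pow, Complex.ofReal_sum, Complex.ofReal_intCast] at h
  rw [h]
  exact Finset.sum_congr rfl fun i _ => by simp [mq, pow_two]

lemma zS_mq {n : ℕ} (hn : 0 < n) (i j : Fin n) {s : ℂ} (hs : 0 < s.re) :
    zS (s + n + 2) (mq i j) = if i = j then epE n hn s / n else 0 := by
  split_ifs with hij
  · subst hij
    have h1 : ∀ j : Fin n, zS (s + n + 2) (mq j j) = zS (s + n + 2) (mq i i) := by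
      intro j
      have := zS_equiv (s + n + 2) (mq j j) (permE (Equiv.swap i j)) (znorm_permE _)
      rw [← this]
      congr 1
      ext k
      simp [mq, permE]
    have h2 := hasSum_sum (s := Finset.univ) (fun j (_ : j ∈ Finset.univ) => mq_hasSum hn j j hs)
    have h3 : HasSum (fun k : Fin n → ℤ => ∑ j, zt (s + n + 2) (mq j j) k) (epE n hn s) := by
      refine hasSum_ptw (epE_hasSum n hn hs) fun k => ?_
      unfold zt
      split_ifs with hk
      · simp
      · have hp : 0 < znorm k := by linarith [one_le_znorm hk]
        have hpc : (znorm k : ℂ) ≠ 0 := Complex.ofReal_ne_zero.2 hp.ne'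
        rw [← Finset.sum_div, sum_mq, Complex.cpow_add _ 2 hpc, Complex.cpow_ofNat]
        field_simp
    have h4 := h2.unique h3
    simp only [h1, Finset.sum_const, Finset.card_univ, Fintype.card_fin, nsmul_eq_mul] at h4
    have : (n : ℂ) ≠ 0 := by exact_mod_cast hn.ne'
    field_simp
    rw [← h4]
  · refine zS_flip _ _ i fun k => ?_
    have : sg i j = 1 := by simp [sg, Ne.symm hij]
    simp [mq, flipE, this]
    simp [sg]

lemma mr_cases : ∀ i j l m : Fin 4, (i = j ∧ j = l ∧ l = m) ∨ (i = j ∧ l = m ∧ i ≠ l) ∨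
    (i = l ∧ j = m ∧ i ≠ j) ∨ (i = m ∧ j = l ∧ i ≠ j) ∨
    ∃ p : Fin 4, sg p i * sg p j * sg p l * sg p m = -1 := by
  unfold sg
  decide +kernel

lemma perm_ex : ∀ i l : Fin 4, i ≠ l → ∃ σ : Equiv.Perm (Fin 4), σ i = 0 ∧ σ l = 1 := by
  decide +kernel

lemma zS_A (w : ℂ) (i : Fin 4) : zS w (mr i i i i) = zS w (mr (0 : Fin 4) 0 0 0) := by
  rw [← zS_equiv w (mr i i i i) (permE (Equiv.swap i 0)) (znorm_permE _)]
  congr 1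
  ext k
  simp [mr, permE]

lemma zS_B (w : ℂ) (i l : Fin 4) (h : i ≠ l) : zS w (mr i i l l) = zS w (mr (0 : Fin 4) 0 1 1) := by
  obtain ⟨σ, h1, h2⟩ := perm_ex i l h
  rw [← zS_equiv w (mr i i l l) (permE σ) (znorm_permE _)]
  congr 1
  ext k
  simp [mr, permE, h1, h2]

lemma zS_mr_form (w : ℂ) (i j l m : Fin 4) : zS w (mr i j l m) =
    ((if i = j then 1 else 0) * (if l = m then 1 else 0) +
      (if i = l then 1 else 0) * (if j = m then 1 else 0) +
      (if i = m then 1 else 0) * (if j = l then 1 else 0) : ℂ) * zS w (mr (0 : Fin 4) 0 1 1) +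
    (if i = j ∧ j = l ∧ l = m then 1 else 0) *
      (zS w (mr (0 : Fin 4) 0 0 0) - 3 * zS w (mr (0 : Fin 4) 0 1 1)) := by
  rcases mr_cases i j l m with ⟨rfl, rfl, rfl⟩ | ⟨rfl, rfl, h⟩ | ⟨rfl, rfl, h⟩ | ⟨rfl, rfl, h⟩ | ⟨p, hp⟩
  · rw [zS_A]; simp; ring
  · rw [zS_B _ _ _ h]; simp [h]
  · have : mr i j i j = mr i i j j := by ext k; unfold mr; ring
    rw [this, zS_B _ _ _ h]; simp [h]
  · have : mr i j j i = mr i i j j := by ext k; unfold mr; ring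
    rw [this, zS_B _ _ _ h]; simp [h]
  · have h0 : zS w (mr i j l m) = 0 := by
      refine zS_flip _ _ p fun k => ?_
      have hp' : (sg p i : ℂ) * (sg p j : ℂ) * (sg p l : ℂ) * (sg p m : ℂ) = -1 := by
        exact_mod_cast hp
      simp only [mr, flipE, Equiv.coe_fn_mk, Int.cast_mul]
      linear_combination ((k i : ℂ) * (k j : ℂ) * (k l : ℂ) * (k m : ℂ)) * hp'
    have key : ∀ x y : Fin 4, sg p x * sg p x * sg p y * sg p y ≠ -1 := by
      intro x y h
      have h1 := sg_mul p x
      have h2 := sg_mul p y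
      rw [h1, one_mul, h2] at h
      norm_num at h
    have n1 : ¬ (i = j ∧ l = m) := by
      rintro ⟨rfl, rfl⟩; exact key _ _ hp
    have n2 : ¬ (i = l ∧ j = m) := by
      rintro ⟨rfl, rfl⟩; exact key i j (by rw [← hp]; ring)
    have n3 : ¬ (i = m ∧ j = l) := by
      rintro ⟨rfl, rfl⟩; exact key i j (by rw [← hp]; ring)
    have n4 : ¬ (i = j ∧ j = l ∧ l = m) := fun h => n1 ⟨h.1, h.2.2⟩
    rw [h0]
    simp only [← ite_and, ite_mul, one_mul, zero_mul, if_neg n1, if_neg n2, if_neg n3, if_neg n4]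
    simp

lemma zS_mr {s : ℂ} (hs : 0 < s.re) :
    zS (s + 8) (mr (0 : Fin 4) 0 1 1) = (epE 4 (by norm_num) s - 4 * quD s) / 24 ∧
    zS (s + 8) (mr (0 : Fin 4) 0 0 0) - 3 * zS (s + 8) (mr (0 : Fin 4) 0 1 1) = quD s := by
  have e8 : s + ((4 : ℕ) : ℂ) + 4 = s + 8 := by push_cast; ring
  have hsum : ∀ i j l m : Fin 4, HasSum (zt (s + 8) (mr i j l m)) (zS (s + 8) (mr i j l m)) := by
    intro i j l m
    have := mr_hasSum (by norm_num) i j l m hs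
    rwa [e8] at this
  have hD : zS (s + 8) (mr (0 : Fin 4) 0 0 0) - 3 * zS (s + 8) (mr (0 : Fin 4) 0 1 1) = quD s := by
    have h1 := (hsum 0 0 0 0).sub ((hsum 0 0 1 1).mul_left 3)
    refine h1.unique (hasSum_ptw (quD_hasSum hs) fun k => ?_)
    unfold zt
    split_ifs
    · simp
    · simp only [qw, mr]; ring
  refine ⟨?_, hD⟩
  have h2 := hasSum_sum (s := Finset.univ) (fun (p : Fin 4 × Fin 4) (_ : p ∈ Finset.univ) =>
    hsum p.1 p.1 p.2 p.2)
  have h3 : HasSum (fun k : Fin 4 → ℤ => ∑ p : Fin 4 × Fin 4, zt (s + 8) (mr p.1 p.1 p.2 p.2) k)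
      (epE 4 (by norm_num) s) := by
    refine hasSum_ptw (epE_hasSum 4 (by norm_num) hs) fun k => ?_
    unfold zt
    split_ifs with hk
    · simp
    · have hp : 0 < znorm k := by linarith [one_le_znorm hk]
      have hpc : (znorm k : ℂ) ≠ 0 := Complex.ofReal_ne_zero.2 hp.ne'
      have e : ∑ p : Fin 4 × Fin 4, mr p.1 p.1 p.2 p.2 k = (znorm k : ℂ) ^ 4 := by
        rw [show (znorm k : ℂ) ^ 4 = (znorm k : ℂ) ^ 2 * (znorm k : ℂ) ^ 2 by ring, ← sum_mq,
          Fintype.sum_mul_sum, Fintype.sum_prod_type]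
        refine Finset.sum_congr rfl fun i _ => Finset.sum_congr rfl fun j _ => ?_
        simp [mr, mq]; ring
      rw [← Finset.sum_div, e, ← e8, Complex.cpow_add _ 4 hpc, Complex.cpow_ofNat]
      field_simp
  have h4 := h2.unique h3
  rw [Fintype.sum_prod_type] at h4
  have h5 : ∑ x : Fin 4, ∑ y : Fin 4, zS (s + 8) (mr x x y y) =
      ∑ x : Fin 4, ∑ y : Fin 4, if x = y then zS (s + 8) (mr (0 : Fin 4) 0 0 0)
        else zS (s + 8) (mr (0 : Fin 4) 0 1 1) := by
    refine Finset.sum_congr rfl fun x _ => Finset.sum_congr rfl fun y _ => ?_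
    split_ifs with h
    · subst h; exact zS_A _ _
    · exact zS_B _ _ _ h
  rw [h5] at h4
  simp [Fin.sum_univ_four] at h4
  linear_combination h4 / 24 - hD / 6

lemma quad_main {n : ℕ} (hn : 0 < n) (i j : Fin n) (w c : ℂ) (hw : w = n + 2)
    (hc : (Real.pi : ℂ) ^ ((n : ℂ) / 2) * (2 * (Complex.Gamma ((n : ℂ) / 2))⁻¹) / n = c) :
    ∃ g : ℂ → ℂ,
      DifferentiableOn ℂ g {s : ℂ | s ≠ 0} ∧
      (∀ s : ℂ, 0 < s.re →
        HasSum (fun k : Fin n → ℤ =>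
          if k = 0 then 0 else ((k i : ℂ) * (k j : ℂ)) / ((znorm k : ℂ) ^ (s + w))) (g s)) ∧
      Tendsto (fun s => s * g s) (𝓝[≠] (0 : ℂ)) (𝓝 (if i = j then c else 0)) := by
  refine ⟨fun s => if i = j then epE n hn s / n else 0, ?_, ?_, ?_⟩
  · split_ifs
    · exact (epE_diff n hn).div_const _
    · exact differentiableOn_const _
  · intro s hs
    have h := mq_hasSum hn i j hs
    rw [zS_mq hn i j hs] at h
    have e : s + w = s + n + 2 := by rw [hw]; ring
    rw [e]
    exact h
  · split_ifs
    · rw [← hc]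
      refine ((epE_res n hn).div_const (n : ℂ)).congr fun s => ?_
      ring
    · simp

/-- **Proposition (special residues).**
For `n = 2`: `Res_{s=0} Σ'_{k∈ℤ²} k_i k_j/|k|^{s+4} = δ_{ij} π`.
For `n = 4`: `Res_{s=0} Σ'_{k∈ℤ⁴} k_i k_j/|k|^{s+6} = δ_{ij} π²/2` and
`Res_{s=0} Σ'_{k∈ℤ⁴} k_i k_j k_l k_m/|k|^{s+8}
  = (δ_{ij}δ_{lm} + δ_{il}δ_{jm} + δ_{im}δ_{jl}) π²/12`.
In each case the series converges for `Re s > 0` and the residue is that of the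
meromorphic continuation at `s = 0`. -/
theorem special_residues :
    (∀ i j : Fin 2, ∃ g : ℂ → ℂ,
      DifferentiableOn ℂ g {s : ℂ | s ≠ 0} ∧
      (∀ s : ℂ, 0 < s.re →
        HasSum (fun k : Fin 2 → ℤ =>
          if k = 0 then 0 else ((k i : ℂ) * (k j : ℂ)) / ((znorm k : ℂ) ^ (s + 4))) (g s)) ∧
      Tendsto (fun s => s * g s) (𝓝[≠] (0 : ℂ))
        (𝓝 (if i = j then ((Real.pi : ℝ) : ℂ) else 0))) ∧
    (∀ i j : Fin 4, ∃ g : ℂ → ℂ,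
      DifferentiableOn ℂ g {s : ℂ | s ≠ 0} ∧
      (∀ s : ℂ, 0 < s.re →
        HasSum (fun k : Fin 4 → ℤ =>
          if k = 0 then 0 else ((k i : ℂ) * (k j : ℂ)) / ((znorm k : ℂ) ^ (s + 6))) (g s)) ∧
      Tendsto (fun s => s * g s) (𝓝[≠] (0 : ℂ))
        (𝓝 (if i = j then ((Real.pi ^ 2 / 2 : ℝ) : ℂ) else 0))) ∧
    (∀ i j l m : Fin 4, ∃ g : ℂ → ℂ,
      DifferentiableOn ℂ g {s : ℂ | s ≠ 0} ∧
      (∀ s : ℂ, 0 < s.re →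
        HasSum (fun k : Fin 4 → ℤ =>
          if k = 0 then 0 else
            ((k i : ℂ) * (k j : ℂ) * (k l : ℂ) * (k m : ℂ)) / ((znorm k : ℂ) ^ (s + 8)))
          (g s)) ∧
      Tendsto (fun s => s * g s) (𝓝[≠] (0 : ℂ))
        (𝓝 (((if i = j then 1 else 0) * (if l = m then 1 else 0) +
              (if i = l then 1 else 0) * (if j = m then 1 else 0) +
              (if i = m then 1 else 0) * (if j = l then 1 else 0) : ℂ) *
            ((Real.pi ^ 2 / 12 : ℝ) : ℂ)))) := by
  refine ⟨fun i j => ?_, fun i j => ?_, fun i j l m => ?_⟩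
  · refine quad_main (by norm_num) i j 4 _ (by norm_num) ?_
    simp
  · refine quad_main (by norm_num) i j 6 _ (by norm_num) ?_
    have hg : Complex.Gamma 2 = 1 := by
      simp
    norm_num [hg]
    ring
  · have h4 : 0 < 4 := by norm_num
    refine ⟨fun s => ((if i = j then 1 else 0) * (if l = m then 1 else 0) +
      (if i = l then 1 else 0) * (if j = m then 1 else 0) +
      (if i = m then 1 else 0) * (if j = l then 1 else 0) : ℂ) * ((epE 4 h4 s - 4 * quD s) / 24) +
      (if i = j ∧ j = l ∧ l = m then 1 else 0) * quD s, ?_, ?_, ?_⟩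
    · exact (((((epE_diff 4 h4).sub (quD_diff.differentiableOn.const_mul 4))).div_const 24).const_mul
        _).add (quD_diff.differentiableOn.const_mul _)
    · intro s hs
      have h := mr_hasSum h4 i j l m hs
      have e8 : s + ((4 : ℕ) : ℂ) + 4 = s + 8 := by push_cast; ring
      rw [e8, zS_mr_form, (zS_mr hs).2, (zS_mr hs).1] at h
      exact h
    · have h1 := epE_res 4 h4
      have hg : Complex.Gamma 2 = 1 := by
        simp
      have e4 : (Real.pi : ℂ) ^ (((4 : ℕ) : ℂ) / 2) * (2 * (Complex.Gamma (((4 : ℕ) : ℂ) / 2))⁻¹)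
          = 2 * (Real.pi : ℂ) ^ 2 := by
        norm_num [hg]
        ring
      rw [e4] at h1
      have h2 : Tendsto (fun s => s * quD s) (𝓝[≠] (0 : ℂ)) (𝓝 0) := by
        have := ((continuous_id.mul quD_diff.continuous).tendsto 0).mono_left
          (nhdsWithin_le_nhds (s := {0}ᶜ))
        simpa [Function.comp_def, Pi.mul_def] using this
      have h3 := (((h1.sub (h2.const_mul 4)).div_const 24).const_mul
        ((if i = j then 1 else 0) * (if l = m then 1 else 0) +
          (if i = l then 1 else 0) * (if j = m then 1 else 0) +
          (if i = m then 1 else 0) * (if j = l then 1 else 0) : ℂ)).add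
        (h2.const_mul (if i = j ∧ j = l ∧ l = m then (1 : ℂ) else 0))
      refine (h3.congr fun s => ?_).trans (le_of_eq ?_)
      · ring
      · congr 1
        push_cast
        ring

end
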